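/- For every real x ≥ 1, the Riemann A-function A(x) = Σ_{n=1}^∞ (2n⁴π²x − 3n²π)·x^{1/2}·e^{−n²πx} satisfies A(x) > 0. -/

import Mathlib

/-!
For `x ≥ 1` every term of the series is positive: its first factor is `n² π (2 n² π x − 3)`, and
`n² π x ≥ π > 3`. The sum is then positive as soon as the series converges (a divergent `tsum` would
be `0`), which follows from `e^{−n² π x} ≤ e^{−n}` and the convergence of `∑ n⁴ e^{−n}`.
-/

/-- The Riemann A-function
`A(x) = ∑_{n=1}^∞ (2 n⁴ π² x − 3 n² π) · x^{1/2} · e^{−n² π x}`. -/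
noncomputable def RiemannA (x : ℝ) : ℝ :=
  ∑' n : ℕ+, (2 * (n : ℝ) ^ 4 * Real.pi ^ 2 * x - 3 * (n : ℝ) ^ 2 * Real.pi) *
    Real.sqrt x * Real.exp (-(n : ℝ) ^ 2 * Real.pi * x)

lemma riemannA_term_pos (x : ℝ) (hx : 1 ≤ x) (n : ℕ+) :
    0 < (2 * (n : ℝ) ^ 4 * Real.pi ^ 2 * x - 3 * (n : ℝ) ^ 2 * Real.pi) *
      Real.sqrt x * Real.exp (-(n : ℝ) ^ 2 * Real.pi * x) := by
  have hpi := Real.pi_gt_three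
  have hn : (1 : ℝ) ≤ (n : ℝ) := by exact_mod_cast n.pos
  have hn2 : (1 : ℝ) ≤ (n : ℝ) ^ 2 := one_le_pow₀ hn
  have hnx : 1 ≤ (n : ℝ) ^ 2 * x := one_le_mul_of_one_le_of_one_le hn2 hx
  have hbracket : 0 < 2 * ((n : ℝ) ^ 2 * x) * Real.pi - 3 := by nlinarith
  have hfactor : 0 < 2 * (n : ℝ) ^ 4 * Real.pi ^ 2 * x - 3 * (n : ℝ) ^ 2 * Real.pi := by
    have hprod : 0 < ((n : ℝ) ^ 2 * Real.pi) * (2 * ((n : ℝ) ^ 2 * x) * Real.pi - 3) := by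
      positivity
    linarith
  have hsqrt : 0 < Real.sqrt x := Real.sqrt_pos.mpr (by linarith)
  positivity

lemma riemannA_summable (x : ℝ) (hx : 1 ≤ x) :
    Summable fun n : ℕ+ => (2 * (n : ℝ) ^ 4 * Real.pi ^ 2 * x - 3 * (n : ℝ) ^ 2 * Real.pi) *
      Real.sqrt x * Real.exp (-(n : ℝ) ^ 2 * Real.pi * x) := by
  have hmajorant : Summable fun n : ℕ+ =>
      (2 * Real.pi ^ 2 * x * Real.sqrt x) * ((n : ℝ) ^ 4 * Real.exp (-1 * (n : ℝ))) := by
    have h := (Real.summable_pow_mul_exp_neg_nat_mul 4 one_pos).mul_left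
      (2 * Real.pi ^ 2 * x * Real.sqrt x)
    exact h.comp_injective PNat.coe_injective
  refine hmajorant.of_nonneg_of_le (fun n => (riemannA_term_pos x hx n).le) fun n => ?_
  have hpi := Real.pi_gt_three
  have hn : (1 : ℝ) ≤ (n : ℝ) := by exact_mod_cast n.pos
  have hpix : 1 ≤ Real.pi * x := one_le_mul_of_one_le_of_one_le (by linarith) hx
  have hexp : Real.exp (-(n : ℝ) ^ 2 * Real.pi * x) ≤ Real.exp (-1 * (n : ℝ)) := by
    apply Real.exp_le_exp.mpr
    nlinarith [mul_le_mul_of_nonneg_left hpix (sq_nonneg (n : ℝ))]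
  have hfactor : 2 * (n : ℝ) ^ 4 * Real.pi ^ 2 * x - 3 * (n : ℝ) ^ 2 * Real.pi ≤
      2 * (n : ℝ) ^ 4 * Real.pi ^ 2 * x := by
    have : 0 ≤ 3 * (n : ℝ) ^ 2 * Real.pi := by positivity
    linarith
  calc _ ≤ (2 * (n : ℝ) ^ 4 * Real.pi ^ 2 * x) * Real.sqrt x * Real.exp (-1 * (n : ℝ)) := by
        gcongr
    _ = _ := by ring

/-- For every real `x ≥ 1`, the Riemann A-function satisfies `A(x) > 0`. -/
theorem riemannA_pos (x : ℝ) (hx : 1 ≤ x) : 0 < RiemannA x :=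
  (riemannA_summable x hx).tsum_pos (fun n => (riemannA_term_pos x hx n).le) 1
    (riemannA_term_pos x hx 1)
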